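/- Let m ≥ 2 be an integer, let (a_α)_{1 ≤ |α| ≤ m−1} be complex numbers, let a₀ be real, and let H := ∑_{1 ≤ |α| ≤ m−1} conj(a_α) S_α* + a₀ I + ∑_{1 ≤ |α| ≤ m−1} a_α S_α, a selfadjoint bounded operator on ℓ²(𝔽ₙ⁺). If ‖H‖ ≤ 1, then: (i) (∑_{|α|=k} |a_α|²)^{1/2} ≤ (1 − |a₀|) · cos(π/(⌊(m−1)/k⌋ + 2)) for every 1 ≤ k ≤ m−1; and (ii) |a₀| + 2 ∑_{1 ≤ |α| ≤ m−1} |a_α| r_α ≤ 1 for every tuple r = (r₁,…,rₙ) of nonnegative reals with ‖r‖₂ ≤ t_m. -/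

import Mathlib

open scoped BigOperators

/-- The full Fock space, identified with `ℓ²(𝔽ₙ⁺)` where the free monoid `𝔽ₙ⁺` on `n`
generators is identified with `List (Fin n)`. -/
noncomputable abbrev Fock (n : ℕ) : Type := lp (fun _ : List (Fin n) => ℂ) 2

/-- The orthonormal basis vector `e_α` of the Fock space. -/
noncomputable def fockBasis (n : ℕ) (α : List (Fin n)) : Fock n := lp.single 2 α 1

/-- For a word `α = g_{i₁} ⋯ g_{i_k}`, the product `T_α = T_{i₁} ⋯ T_{i_k}` (and `T_{g₀} = 1`). -/
noncomputable def wordProd {n : ℕ} {M : Type*} [Monoid M] (T : Fin n → M)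
    (α : List (Fin n)) : M :=
  (α.map T).prod

/-- `fm m t = ∑_{k=1}^{m-1} t^k * cos (π / (⌊(m-1)/k⌋ + 2))`. -/
noncomputable def fm (m : ℕ) (t : ℝ) : ℝ :=
  ∑ k ∈ Finset.Icc 1 (m - 1), t ^ k * Real.cos (Real.pi / (((m - 1) / k + 2 : ℕ) : ℝ))

/-!
Since `1 - H` and `1 + H` are positive and of the same shape as `H`, with constant terms `1 - a₀`
and `1 + a₀`, it suffices to bound the coefficients of a positive `A = ∑ (T l)⋆ + c + ∑ T l`, where
`T l = ∑_{|α| = l} a_α S_α` raises the degree by `l`. The Cuntz–Toeplitz relations `Sᵢ⋆ Sⱼ = δᵢⱼ`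
make `T k` a multiple `β = (∑_{|α| = k} |a_α|²)^{1/2}` of an isometry, so `ξ p = β^{-p} T_k^p e`
are unit vectors of degrees `k p`. On them the form of `A` has diagonal entries `c` and first
subdiagonal entries `β`, and it vanishes beyond the `N`-th off-diagonal, `N = ⌊(m - 1) / k⌋`.

As in Fejér's inequality for the coefficients of nonnegative trigonometric polynomials, evaluate
this form at `∑_{p ≤ L} z ^ p • ξ p` for the roots `z` of `z ^ (N + 2) = -1` and add up with the
weights `cos (π / (N + 2)) - Re z ≥ 0`. Only the diagonal and the first off-diagonals survive, which
leaves `L β ≤ (L + 1) c cos (π / (N + 2))`, and `L → ∞` gives (i). Part (ii) follows by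
Cauchy–Schwarz, because `∑_{|α| = k} r_α² = ‖r‖₂ ^ (2 k)`.
-/

open Finset ContinuousLinearMap
open scoped InnerProductSpace

section Quadrature

lemma sum_range_zpow_pow_of_isPrimitiveRoot {K : Type*} [Field K] {ζ : K} {M : ℕ}
    (hζ : IsPrimitiveRoot ζ M) (s : ℤ) :
    ∑ j ∈ range M, (ζ ^ s) ^ j = if (M : ℤ) ∣ s then (M : K) else 0 := by
  split_ifs with hs
  · simp [(hζ.zpow_eq_one_iff_dvd s).mpr hs]
  · have hpow : (ζ ^ s) ^ M = 1 := by
      rw [← zpow_natCast, zpow_comm, zpow_natCast, hζ.pow_eq_one, one_zpow]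
    rw [geom_sum_eq (mt (hζ.zpow_eq_one_iff_dvd s).mp hs), hpow, sub_self, zero_div]

/-- The `j`-th of the `M` solutions of `z ^ M = -1` on the unit circle, used as quadrature nodes
for trigonometric polynomials of degree less than `M`. -/
noncomputable def fejerNode (M j : ℕ) : ℂ :=
  Complex.exp (((2 * j + 1) * (Real.pi / M) : ℝ) * Complex.I)

lemma norm_fejerNode (M j : ℕ) : ‖fejerNode M j‖ = 1 := Complex.norm_exp_ofReal_mul_I _

lemma fejerNode_ne_zero (M j : ℕ) : fejerNode M j ≠ 0 := Complex.exp_ne_zero _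

lemma fejerNode_re (M j : ℕ) :
    (fejerNode M j).re = Real.cos ((2 * j + 1) * (Real.pi / M)) := Complex.exp_ofReal_mul_I_re _

lemma fejerNode_re_le {M j : ℕ} (hj : j < M) :
    (fejerNode M j).re ≤ Real.cos (Real.pi / M) := by
  rw [fejerNode_re]
  have hM : (0 : ℝ) < M := by exact_mod_cast j.zero_le.trans_lt hj
  have hjM : (j : ℝ) + 1 ≤ M := by exact_mod_cast hj
  have hj₀ : (0 : ℝ) ≤ j := j.cast_nonneg
  set θ := Real.pi / (M : ℝ)
  have hθ : 0 < θ := by positivity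
  have hMθ : (M : ℝ) * θ = Real.pi := mul_div_cancel₀ _ hM.ne'
  rcases le_total ((2 * (j : ℝ) + 1) * θ) Real.pi with hle | hge
  · exact Real.cos_le_cos_of_nonneg_of_le_pi hθ.le hle (by nlinarith [mul_nonneg hj₀ hθ.le])
  · rw [← Real.cos_two_pi_sub]
    exact Real.cos_le_cos_of_nonneg_of_le_pi hθ.le (by linarith) (by nlinarith)

lemma sum_fejerNode_zpow {M : ℕ} {s : ℤ} (hs : |s| < M) :
    ∑ j ∈ range M, fejerNode M j ^ s = if s = 0 then (M : ℂ) else 0 := by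
  have hM : M ≠ 0 := by
    rintro rfl
    exact (abs_nonneg s).not_gt hs
  set ω := Complex.exp (2 * Real.pi * Complex.I / M) with hω
  have hnode (j : ℕ) : fejerNode M j = fejerNode M 0 * ω ^ j := by
    rw [fejerNode, fejerNode, hω, ← Complex.exp_nat_mul, ← Complex.exp_add]
    congr 1
    push_cast
    ring
  have hnode_zpow (j : ℕ) : fejerNode M j ^ s = fejerNode M 0 ^ s * (ω ^ s) ^ j := by
    rw [hnode, mul_zpow, ← zpow_natCast, ← zpow_natCast, zpow_comm]
  have hdvd : (M : ℤ) ∣ s ↔ s = 0 :=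
    ⟨fun h => Int.eq_zero_of_abs_lt_dvd h hs, fun h => h ▸ dvd_zero _⟩
  calc ∑ j ∈ range M, fejerNode M j ^ s
      = fejerNode M 0 ^ s * ∑ j ∈ range M, (ω ^ s) ^ j := by
        rw [mul_sum]
        exact sum_congr rfl fun j _ => hnode_zpow j
    _ = if s = 0 then (M : ℂ) else 0 := by
        rw [sum_range_zpow_pow_of_isPrimitiveRoot (Complex.isPrimitiveRoot_exp M hM)]
        simp only [hdvd, mul_ite, mul_zero]
        split_ifs with h
        · rw [h, zpow_zero, one_mul]
        · rfl

/-- The quadrature weight at `fejerNode M j`. It is nonnegative and of degree one in the node, so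
that the weighted sums of powers `z ^ s`, `|s| + 1 < M`, vanish unless `|s| ≤ 1`. -/
noncomputable def fejerWeight (M j : ℕ) : ℝ := Real.cos (Real.pi / M) - (fejerNode M j).re

lemma fejerWeight_nonneg {M j : ℕ} (hj : j < M) : 0 ≤ fejerWeight M j :=
  sub_nonneg.mpr (fejerNode_re_le hj)

lemma sum_fejerWeight_mul_zpow {M : ℕ} {s : ℤ} (hs : |s| + 1 < M) :
    ∑ j ∈ range M, (fejerWeight M j : ℂ) * fejerNode M j ^ s =
      M * ((if s = 0 then (Real.cos (Real.pi / M) : ℂ) else 0)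
        - (if s = 1 then 1 / 2 else 0) - (if s = -1 then 1 / 2 else 0)) := by
  have hterm (j : ℕ) : (fejerWeight M j : ℂ) * fejerNode M j ^ s =
      (Real.cos (Real.pi / M) : ℂ) * fejerNode M j ^ s
        - fejerNode M j ^ (s - 1) / 2 - fejerNode M j ^ (s + 1) / 2 := by
    rw [fejerWeight, Complex.ofReal_sub, Complex.re_eq_add_conj,
      ← Complex.inv_eq_conj (norm_fejerNode M j), zpow_add_one₀ (fejerNode_ne_zero M j),
      zpow_sub_one₀ (fejerNode_ne_zero M j)]
    ring
  have hs_sub : |s - 1| < M := (abs_sub s 1).trans_lt (by simpa using hs)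
  have hs_add : |s + 1| < M := (abs_add_le s 1).trans_lt (by simpa using hs)
  simp only [hterm, sum_sub_distrib, ← mul_sum, ← sum_div, sum_fejerNode_zpow hs_sub,
    sum_fejerNode_zpow hs_add, sum_fejerNode_zpow ((lt_add_one _).trans hs), sub_eq_zero,
    add_eq_zero_iff_eq_neg]
  split_ifs <;> first | omega | ring

end Quadrature

section BandedForms

variable {𝓗 : Type*} [NormedAddCommGroup 𝓗] [InnerProductSpace ℂ 𝓗]

lemma sum_range_succ_sum_ite_eq_add_one {M : Type*} [AddCommMonoid M] (g : ℕ → ℕ → M) (L : ℕ) :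
    ∑ q ∈ range (L + 1), ∑ p ∈ range (L + 1), (if p = q + 1 then g q p else 0) =
      ∑ q ∈ range L, g q (q + 1) := by
  simp only [sum_ite_eq', mem_range, add_lt_add_iff_right]
  rw [sum_range_succ, if_neg (lt_irrefl L), add_zero]
  exact sum_congr rfl fun q hq => if_pos (mem_range.mp hq)

lemma inner_sum_pow_smul_map (A : 𝓗 →ₗ[ℂ] 𝓗) (ξ : ℕ → 𝓗) {z : ℂ} (hz : ‖z‖ = 1) (L : ℕ) :
    ⟪∑ p ∈ range L, z ^ p • ξ p, A (∑ p ∈ range L, z ^ p • ξ p)⟫_ℂ =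
      ∑ q ∈ range L, ∑ p ∈ range L, z ^ ((p : ℤ) - q) * ⟪ξ q, A (ξ p)⟫_ℂ := by
  have hz₀ : z ≠ 0 := norm_ne_zero_iff.mp (by simp [hz])
  simp only [map_sum, map_smul, sum_inner, inner_sum, inner_smul_left, inner_smul_right, map_pow,
    ← Complex.inv_eq_conj hz, zpow_sub₀ hz₀, zpow_natCast, mul_sum]
  rw [sum_comm]
  exact sum_congr rfl fun q _ => sum_congr rfl fun p _ => by ring

lemma sum_fejerWeight_mul_inner (A : 𝓗 →ₗ[ℂ] 𝓗) (ξ : ℕ → 𝓗) {N : ℕ}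
    (hband : ∀ p q : ℕ, N < |(p : ℤ) - q| → ⟪ξ q, A (ξ p)⟫_ℂ = 0) (L : ℕ) :
    ∑ j ∈ range (N + 2), (fejerWeight (N + 2) j : ℂ) *
        ⟪∑ p ∈ range (L + 1), fejerNode (N + 2) j ^ p • ξ p,
          A (∑ p ∈ range (L + 1), fejerNode (N + 2) j ^ p • ξ p)⟫_ℂ =
      (N + 2 : ℕ) * (Real.cos (Real.pi / (N + 2 : ℕ)) * ∑ p ∈ range (L + 1), ⟪ξ p, A (ξ p)⟫_ℂ
        - (∑ p ∈ range L, ⟪ξ p, A (ξ (p + 1))⟫_ℂ) / 2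
        - (∑ p ∈ range L, ⟪ξ (p + 1), A (ξ p)⟫_ℂ) / 2) := by
  have hentry (q p : ℕ) : ∑ j ∈ range (N + 2), (fejerWeight (N + 2) j : ℂ) *
        (fejerNode (N + 2) j ^ ((p : ℤ) - q) * ⟪ξ q, A (ξ p)⟫_ℂ) =
      (N + 2 : ℕ) * ((if q = p then Real.cos (Real.pi / (N + 2 : ℕ)) * ⟪ξ q, A (ξ p)⟫_ℂ else 0)
        - (if p = q + 1 then ⟪ξ q, A (ξ p)⟫_ℂ / 2 else 0)
        - (if q = p + 1 then ⟪ξ q, A (ξ p)⟫_ℂ / 2 else 0)) := by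
    rcases lt_or_ge (N : ℤ) |(p : ℤ) - q| with hfar | hnear
    · simp [hband p q hfar]
    · have h₀ : (p : ℤ) - q = 0 ↔ q = p := by omega
      have h₁ : (p : ℤ) - q = 1 ↔ p = q + 1 := by omega
      have h₂ : (p : ℤ) - q = -1 ↔ q = p + 1 := by omega
      simp only [← mul_assoc, ← sum_mul]
      rw [sum_fejerWeight_mul_zpow (by push_cast; omega)]
      simp only [h₀, h₁, h₂]
      split_ifs <;> ring
  simp only [inner_sum_pow_smul_map A ξ (norm_fejerNode _ _),
    mul_sum (range (L + 1)) (fun _ => _) (fejerWeight _ _ : ℂ)]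
  rw [sum_comm]
  conv_lhs => enter [2, q]; rw [sum_comm]
  simp only [hentry, ← mul_sum, sum_sub_distrib]
  rw [sum_range_succ_sum_ite_eq_add_one (fun q p => ⟪ξ q, A (ξ p)⟫_ℂ / 2),
    sum_comm (f := fun q p => if q = p + 1 then _ else _),
    sum_range_succ_sum_ite_eq_add_one (fun p q => ⟪ξ q, A (ξ p)⟫_ℂ / 2)]
  simp only [sum_ite_eq, mem_range, sum_div, mul_sum]
  congr 3
  exact sum_congr rfl fun p hp => if_pos (mem_range.mp hp)

theorem sum_re_inner_succ_le_cos_mul {A : 𝓗 →ₗ[ℂ] 𝓗} (hA : A.IsPositive) (ξ : ℕ → 𝓗) {N : ℕ}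
    (hband : ∀ p q : ℕ, p + N < q → ⟪ξ q, A (ξ p)⟫_ℂ = 0) (L : ℕ) :
    ∑ p ∈ range L, (⟪ξ (p + 1), A (ξ p)⟫_ℂ).re ≤
      Real.cos (Real.pi / (N + 2 : ℕ)) * ∑ p ∈ range (L + 1), (⟪ξ p, A (ξ p)⟫_ℂ).re := by
  have hsymm (x y : 𝓗) : ⟪x, A y⟫_ℂ = star ⟪y, A x⟫_ℂ := by
    rw [← hA.isSymmetric x y]
    exact (inner_conj_symm _ _).symm
  have hband' (p q : ℕ) (h : (N : ℤ) < |(p : ℤ) - q|) : ⟪ξ q, A (ξ p)⟫_ℂ = 0 := by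
    rcases lt_abs.mp h with h | h
    · rw [hsymm, hband q p (by omega), star_zero]
    · exact hband p q (by omega)
  have hsum := congrArg Complex.re (sum_fejerWeight_mul_inner A ξ hband' L)
  have hnonneg : 0 ≤ ∑ j ∈ range (N + 2), fejerWeight (N + 2) j *
      (⟪∑ p ∈ range (L + 1), fejerNode (N + 2) j ^ p • ξ p,
        A (∑ p ∈ range (L + 1), fejerNode (N + 2) j ^ p • ξ p)⟫_ℂ).re :=
    sum_nonneg fun j hj => mul_nonneg (fejerWeight_nonneg (mem_range.mp hj))
      (hA.re_inner_nonneg_right _)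
  have hre (p : ℕ) : (⟪ξ p, A (ξ (p + 1))⟫_ℂ).re = (⟪ξ (p + 1), A (ξ p)⟫_ℂ).re := by
    rw [hsymm]
    exact Complex.conj_re _
  simp only [Complex.re_sum, Complex.re_ofReal_mul, ← Complex.ofReal_natCast, Complex.sub_re,
    Complex.div_ofNat_re, hre] at hsum
  rw [hsum] at hnonneg
  have := nonneg_of_mul_nonneg_right hnonneg (by positivity)
  linarith

end BandedForms

lemma le_of_forall_natCast_mul_le_add_one_mul {K : Type*} [Field K] [LinearOrder K]
    [IsStrictOrderedRing K] [Archimedean K] {x y : K}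
    (h : ∀ L : ℕ, L * x ≤ (L + 1) * y) : x ≤ y := by
  by_contra! hyx
  obtain ⟨L, hL⟩ := exists_nat_gt (y / (x - y))
  rw [div_lt_iff₀ (sub_pos.mpr hyx)] at hL
  linarith [h L]

lemma cos_pi_div_add_two_nonneg (N : ℕ) : 0 ≤ Real.cos (Real.pi / (N + 2 : ℕ)) := by
  have hπ := Real.pi_pos
  refine Real.cos_nonneg_of_neg_pi_div_two_le_of_le
    ((by linarith : -(Real.pi / 2) ≤ 0).trans (by positivity)) ?_
  gcongr
  simp

lemma exists_unit_chain {𝕜 F : Type*} [RCLike 𝕜] [NormedAddCommGroup F] [NormedSpace 𝕜 F]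
    {E : ℕ → Submodule 𝕜 F} {V : F → F} {k i : ℕ} {β : ℝ} (hβ : 0 < β)
    (hnorm : ∀ x, ‖V x‖ = β * ‖x‖) (hV : ∀ i, ∀ x ∈ E i, V x ∈ E (i + k)) {e : F}
    (he : e ∈ E i) (he₁ : ‖e‖ = 1) :
    ∃ ξ : ℕ → F, (∀ p, ξ p ∈ E (i + k * p)) ∧ (∀ p, ‖ξ p‖ = 1) ∧
      ∀ p, V (ξ p) = (β : 𝕜) • ξ (p + 1) := by
  have hβ' : (β : 𝕜) ≠ 0 := by exact_mod_cast hβ.ne'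
  let ξ (p : ℕ) : F := (fun x => (β : 𝕜)⁻¹ • V x)^[p] e
  have hsucc (p : ℕ) : ξ (p + 1) = (β : 𝕜)⁻¹ • V (ξ p) := Function.iterate_succ_apply' _ p e
  refine ⟨ξ, fun p => ?_, fun p => ?_, fun p => by rw [hsucc, smul_inv_smul₀ hβ']⟩
  · induction p with
    | zero => exact he
    | succ p ih =>
      rw [hsucc, mul_add_one, ← add_assoc]
      exact Submodule.smul_mem _ _ (hV _ _ ih)
  · induction p with
    | zero => exact he₁
    | succ p ih =>
      rw [hsucc, norm_smul, hnorm, ih, norm_inv, RCLike.norm_of_nonneg hβ.le, mul_one,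
        inv_mul_cancel₀ hβ.ne']

section HermitianPolynomials

variable {𝓗 : Type*} [NormedAddCommGroup 𝓗] [InnerProductSpace ℂ 𝓗] [CompleteSpace 𝓗]

/-- The selfadjoint operator `∑ (T l)⋆ + c + ∑ T l`, both sums over `1 ≤ l ≤ d`. It plays the role
of a real trigonometric polynomial of degree `d` when `T l` raises the degree by `l` in a graded
Hilbert space. -/
noncomputable def hermitianPolynomial (T : ℕ → 𝓗 →L[ℂ] 𝓗) (c : ℝ) (d : ℕ) : 𝓗 →L[ℂ] 𝓗 :=
  ∑ l ∈ Icc 1 d, adjoint (T l) + (c : ℂ) • 1 + ∑ l ∈ Icc 1 d, T l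

lemma one_sub_hermitianPolynomial (T : ℕ → 𝓗 →L[ℂ] 𝓗) (c : ℝ) (d : ℕ) :
    1 - hermitianPolynomial T c d = hermitianPolynomial (-T) (1 - c) d := by
  simp only [hermitianPolynomial, Pi.neg_apply, map_neg, sum_neg_distrib, Complex.ofReal_sub,
    Complex.ofReal_one, sub_smul, one_smul]
  abel

lemma one_add_hermitianPolynomial (T : ℕ → 𝓗 →L[ℂ] 𝓗) (c : ℝ) (d : ℕ) :
    1 + hermitianPolynomial T c d = hermitianPolynomial T (1 + c) d := by
  simp only [hermitianPolynomial, Complex.ofReal_add, Complex.ofReal_one, add_smul, one_smul]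
  abel

lemma isSelfAdjoint_hermitianPolynomial (T : ℕ → 𝓗 →L[ℂ] 𝓗) (c : ℝ) (d : ℕ) :
    IsSelfAdjoint (hermitianPolynomial T c d) := by
  simp only [isSelfAdjoint_iff, hermitianPolynomial, ← star_eq_adjoint, star_add, star_sum,
    star_star, star_smul, star_one, Complex.star_def, Complex.conj_ofReal]
  abel

lemma isPositive_one_sub_of_norm_le_one {A : 𝓗 →L[ℂ] 𝓗} (hA : IsSelfAdjoint A) (hnorm : ‖A‖ ≤ 1) :
    (1 - A).IsPositive := by
  rw [← le_def]
  calc A ≤ algebraMap ℝ _ ‖A‖ := hA.le_algebraMap_norm_self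
    _ ≤ algebraMap ℝ _ 1 := algebraMap_mono _ hnorm
    _ = 1 := map_one _

variable {T : ℕ → 𝓗 →L[ℂ] 𝓗} {c : ℝ} {d : ℕ} {E : ℕ → Submodule ℂ 𝓗}

section Graded

variable (hE : Pairwise fun i j => E i ⟂ E j) (hT : ∀ l i, ∀ x ∈ E i, T l x ∈ E (i + l))
include hE hT

lemma inner_hermitianPolynomial_of_le {i j : ℕ} (hij : i ≤ j) {x y : 𝓗} (hx : x ∈ E i)
    (hy : y ∈ E j) : ⟪y, hermitianPolynomial T c d x⟫_ℂ =
      c * ⟪y, x⟫_ℂ + ∑ l ∈ Icc 1 d, ⟪y, T l x⟫_ℂ := by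
  have hlower : ∑ l ∈ Icc 1 d, ⟪T l y, x⟫_ℂ = 0 := sum_eq_zero fun l hl =>
    (hE (by grind)).inner_eq (hT l j y hy) hx
  simp only [hermitianPolynomial, add_apply, _root_.sum_apply, smul_apply, one_apply_eq_self,
    inner_add_right, inner_sum, adjoint_inner_right, inner_smul_right, hlower, zero_add]

lemma inner_hermitianPolynomial_of_eq {i : ℕ} {x y : 𝓗} (hx : x ∈ E i) (hy : y ∈ E i) :
    ⟪y, hermitianPolynomial T c d x⟫_ℂ = c * ⟪y, x⟫_ℂ := by
  rw [inner_hermitianPolynomial_of_le hE hT le_rfl hx hy, sum_eq_zero, add_zero]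
  exact fun l hl => (hE (by grind)).inner_eq hy (hT l i x hx)

lemma inner_hermitianPolynomial_of_add {i l : ℕ} (hl : l ∈ Icc 1 d) {x y : 𝓗} (hx : x ∈ E i)
    (hy : y ∈ E (i + l)) : ⟪y, hermitianPolynomial T c d x⟫_ℂ = ⟪y, T l x⟫_ℂ := by
  rw [inner_hermitianPolynomial_of_le hE hT (Nat.le_add_right i l) hx hy,
    (hE (by grind)).inner_eq hy hx, sum_eq_single_of_mem l hl, mul_zero, zero_add]
  exact fun l' _ hne => (hE (by grind)).inner_eq hy (hT l' i x hx)

lemma inner_hermitianPolynomial_of_add_lt {i j : ℕ} (hij : i + d < j) {x y : 𝓗} (hx : x ∈ E i)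
    (hy : y ∈ E j) : ⟪y, hermitianPolynomial T c d x⟫_ℂ = 0 := by
  rw [inner_hermitianPolynomial_of_le hE hT (by omega) hx hy, (hE (by omega)).inner_eq hy hx,
    sum_eq_zero, mul_zero, zero_add]
  exact fun l hl => (hE (by grind)).inner_eq hy (hT l i x hx)

end Graded

variable (hE : Pairwise fun i j => E i ⟂ E j) (hT : ∀ l i, ∀ x ∈ E i, T l x ∈ E (i + l))
include hE hT

theorem le_mul_cos_of_isPositive_hermitianPolynomial
    (hpos : (hermitianPolynomial T c d).IsPositive) {k i : ℕ} (hk : k ∈ Icc 1 d) {β : ℝ}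
    (hβ : ∀ x, ‖T k x‖ = β * ‖x‖) {e : 𝓗} (he : e ∈ E i) (he₁ : ‖e‖ = 1) :
    β ≤ c * Real.cos (Real.pi / (d / k + 2 : ℕ)) := by
  have hdiag {j : ℕ} {x : 𝓗} (hx : x ∈ E j) (hx₁ : ‖x‖ = 1) :
      (⟪x, hermitianPolynomial T c d x⟫_ℂ).re = c := by
    rw [inner_hermitianPolynomial_of_eq hE hT hx hx, inner_self_eq_norm_sq_to_K, hx₁]
    simp
  have hc : 0 ≤ c := hdiag he he₁ ▸ hpos.re_inner_nonneg_right e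
  rcases le_or_gt β 0 with hβ₀ | hβ₀
  · exact hβ₀.trans (mul_nonneg hc (cos_pi_div_add_two_nonneg _))
  obtain ⟨ξ, hmem, hunit, hshift⟩ := exists_unit_chain hβ₀ hβ (hT k) he he₁
  have hstep (p : ℕ) : (⟪ξ (p + 1), hermitianPolynomial T c d (ξ p)⟫_ℂ).re = β := by
    have hmem_succ : ξ (p + 1) ∈ E (i + k * p + k) := by
      simpa only [mul_add_one, add_assoc] using hmem (p + 1)
    rw [inner_hermitianPolynomial_of_add hE hT hk (hmem p) hmem_succ, hshift,
      inner_smul_right, inner_self_eq_norm_sq_to_K, hunit]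
    simp
  have hband (p q : ℕ) (hpq : p + d / k < q) :
      ⟪ξ q, hermitianPolynomial T c d (ξ p)⟫_ℂ = 0 := by
    refine inner_hermitianPolynomial_of_add_lt hE hT ?_ (hmem p) (hmem q)
    have hd : d < k * (d / k + 1) := Nat.lt_mul_div_succ d (mem_Icc.mp hk).1
    have hq : k * (p + (d / k + 1)) ≤ k * q := Nat.mul_le_mul_left k hpq
    rw [mul_add] at hq
    omega
  refine le_of_forall_natCast_mul_le_add_one_mul fun L => ?_
  have hsum := sum_re_inner_succ_le_cos_mul (A := (hermitianPolynomial T c d : 𝓗 →ₗ[ℂ] 𝓗))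
    hpos ξ hband L
  simp only [coe_coe, hstep, hdiag (hmem _) (hunit _), sum_const, card_range, nsmul_eq_mul] at hsum
  push_cast at hsum ⊢
  linarith

theorem le_one_sub_abs_mul_cos_of_norm_hermitianPolynomial_le_one
    (hnorm : ‖hermitianPolynomial T c d‖ ≤ 1) {k i : ℕ} (hk : k ∈ Icc 1 d) {β : ℝ}
    (hβ : ∀ x, ‖T k x‖ = β * ‖x‖) {e : 𝓗} (he : e ∈ E i) (he₁ : ‖e‖ = 1) :
    β ≤ (1 - |c|) * Real.cos (Real.pi / (d / k + 2 : ℕ)) := by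
  have hsa := isSelfAdjoint_hermitianPolynomial T c d
  rcases abs_cases c with ⟨hc, -⟩ | ⟨hc, -⟩
  · have hpos := isPositive_one_sub_of_norm_le_one hsa hnorm
    rw [one_sub_hermitianPolynomial] at hpos
    rw [hc]
    refine le_mul_cos_of_isPositive_hermitianPolynomial hE (fun l i x hx => ?_) hpos hk
      (fun x => (norm_neg _).trans (hβ x)) he he₁
    exact neg_mem (hT l i x hx)
  · have hpos := isPositive_one_sub_of_norm_le_one hsa.neg ((norm_neg _).trans_le hnorm)
    rw [sub_neg_eq_add, one_add_hermitianPolynomial] at hpos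
    rw [hc, sub_neg_eq_add]
    exact le_mul_cos_of_isPositive_hermitianPolynomial hE hT hpos hk hβ he he₁

end HermitianPolynomials

section Words

variable {n : ℕ}

lemma wordProd_cons {M : Type*} [Monoid M] (T : Fin n → M) (i : Fin n) (α : List (Fin n)) :
    wordProd T (i :: α) = T i * wordProd T α := List.prod_cons

lemma star_wordProd_mul_wordProd {R : Type*} [MonoidWithZero R] [StarMul R] {S : Fin n → R}
    (hS : ∀ i j, star (S i) * S j = if i = j then 1 else 0) {α β : List (Fin n)}
    (hlen : α.length = β.length) :
    star (wordProd S α) * wordProd S β = if α = β then 1 else 0 := by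
  induction α generalizing β with
  | nil =>
    obtain rfl := List.length_eq_zero_iff.mp hlen.symm
    simp [wordProd]
  | cons i α ih =>
    obtain ⟨j, β, rfl⟩ := List.exists_cons_of_length_eq_add_one hlen.symm
    have hreassoc : star (wordProd S (i :: α)) * wordProd S (j :: β) =
        star (wordProd S α) * (star (S i) * S j) * wordProd S β := by
      simp only [wordProd_cons, star_mul, mul_assoc]
    rw [hreassoc, hS]
    by_cases hij : i = j
    · simp [hij, ih (Nat.succ_injective hlen)]
    · simp [hij]

/-- The part `∑_{|α| = k} a_α S_α` of degree `k` of a noncommutative polynomial in `S`. -/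
noncomputable def homogeneousPart {R : Type*} [Semiring R] [Module ℂ R] (S : Fin n → R)
    (a : List (Fin n) → ℂ) (k : ℕ) : R :=
  ∑ w : Fin k → Fin n, a (List.ofFn w) • wordProd S (List.ofFn w)

lemma star_homogeneousPart_mul_self {R : Type*} [Semiring R] [StarRing R] [Algebra ℂ R]
    [StarModule ℂ R] {S : Fin n → R} (hS : ∀ i j, star (S i) * S j = if i = j then 1 else 0)
    (a : List (Fin n) → ℂ) (k : ℕ) :
    star (homogeneousPart S a k) * homogeneousPart S a k =
      ((∑ w : Fin k → Fin n, ‖a (List.ofFn w)‖ ^ 2 : ℝ) : ℂ) • 1 := by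
  have hword (w w' : Fin k → Fin n) :
      star (wordProd S (List.ofFn w)) * wordProd S (List.ofFn w') = if w = w' then 1 else 0 := by
    rw [star_wordProd_mul_wordProd hS (by simp)]
    simp only [List.ofFn_injective.eq_iff]
  simp only [homogeneousPart, star_sum, star_smul, sum_mul_sum, smul_mul_smul_comm, hword,
    smul_ite, smul_zero, sum_ite_eq, mem_univ, if_true, ← sum_smul, Complex.star_def,
    Complex.conj_mul', Complex.ofReal_sum, Complex.ofReal_pow]

lemma sum_wordProd_sq {R : Type*} [CommSemiring R] (r : Fin n → R) (k : ℕ) :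
    ∑ w : Fin k → Fin n, wordProd r (List.ofFn w) ^ 2 = (∑ i, r i ^ 2) ^ k := by
  simp only [wordProd, List.map_ofFn, List.prod_ofFn, Function.comp_apply, ← prod_pow,
    Fintype.sum_pow]

lemma sum_mul_wordProd_le_sqrt_mul_pow {k : ℕ} (f : (Fin k → Fin n) → ℝ) (r : Fin n → ℝ) :
    ∑ w, f w * wordProd r (List.ofFn w) ≤ √(∑ w, f w ^ 2) * √(∑ i, r i ^ 2) ^ k := by
  have hsqrt : √((∑ i, r i ^ 2) ^ k) = √(∑ i, r i ^ 2) ^ k := by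
    rw [Real.sqrt_eq_iff_mul_self_eq (by positivity) (by positivity), ← mul_pow,
      Real.mul_self_sqrt (by positivity)]
  rw [← hsqrt, ← sum_wordProd_sq]
  exact Real.sum_mul_le_sqrt_mul_sqrt _ _ _

end Words

section Fock

variable {n : ℕ}

lemma inner_fockBasis_left (α : List (Fin n)) (x : Fock n) : ⟪fockBasis n α, x⟫_ℂ = x α := by
  simp [fockBasis, lp.inner_single_left]

lemma inner_fockBasis (α β : List (Fin n)) :
    ⟪fockBasis n α, fockBasis n β⟫_ℂ = if α = β then 1 else 0 := by
  rw [inner_fockBasis_left, fockBasis, lp.single_apply, Pi.single_apply]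

lemma norm_fockBasis (α : List (Fin n)) : ‖fockBasis n α‖ = 1 := by
  simp [fockBasis, lp.norm_single]

lemma ext_inner_fockBasis {A B : Fock n →L[ℂ] Fock n}
    (h : ∀ α β, ⟪fockBasis n α, A (fockBasis n β)⟫_ℂ = ⟪fockBasis n α, B (fockBasis n β)⟫_ℂ) :
    A = B := by
  refine lp.ext_continuousLinearMap ENNReal.ofNat_ne_top fun β => ?_
  ext α
  have hcoord := h α β
  rw [inner_fockBasis_left, inner_fockBasis_left] at hcoord
  exact hcoord

/-- The subspace of the Fock space spanned by the words of length `l`. -/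
noncomputable def fockDegree (n l : ℕ) : Submodule ℂ (Fock n) :=
  Submodule.span ℂ (fockBasis n '' {α | α.length = l})

lemma fockBasis_mem_fockDegree (α : List (Fin n)) : fockBasis n α ∈ fockDegree n α.length :=
  Submodule.subset_span ⟨α, rfl, rfl⟩

lemma pairwise_isOrtho_fockDegree (n : ℕ) :
    Pairwise fun i j => fockDegree n i ⟂ fockDegree n j := by
  intro i j hij
  rw [fockDegree, fockDegree, Submodule.isOrtho_span]
  rintro _ ⟨α, rfl, rfl⟩ _ ⟨β, rfl, rfl⟩
  rw [inner_fockBasis, if_neg (ne_of_apply_ne List.length hij)]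

variable {S : Fin n → Fock n →L[ℂ] Fock n}
  (hS : ∀ (i : Fin n) (α : List (Fin n)), S i (fockBasis n α) = fockBasis n (i :: α))
include hS

lemma star_creation_mul_creation (i j : Fin n) : star (S i) * S j = if i = j then 1 else 0 := by
  refine ext_inner_fockBasis fun α β => ?_
  rw [star_eq_adjoint, mul_apply_eq_comp, adjoint_inner_right, hS, hS, inner_fockBasis]
  by_cases hij : i = j <;> simp [hij, inner_fockBasis]

lemma wordProd_creation_fockBasis (α β : List (Fin n)) :
    wordProd S α (fockBasis n β) = fockBasis n (α ++ β) := by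
  induction α with
  | nil => rfl
  | cons i α ih => rw [wordProd_cons, mul_apply_eq_comp, ih, hS, List.cons_append]

lemma homogeneousPart_creation_mem_fockDegree (a : List (Fin n) → ℂ) (k l : ℕ) {x : Fock n}
    (hx : x ∈ fockDegree n l) : homogeneousPart S a k x ∈ fockDegree n (l + k) := by
  suffices hle : fockDegree n l ≤
      (fockDegree n (l + k)).comap (homogeneousPart S a k).toLinearMap from hle hx
  refine Submodule.span_le.mpr ?_
  rintro _ ⟨β, rfl, rfl⟩
  simp only [SetLike.mem_coe, Submodule.mem_comap, coe_coe, homogeneousPart, _root_.sum_apply,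
    smul_apply, wordProd_creation_fockBasis hS]
  refine sum_mem fun w _ => Submodule.smul_mem _ _ ?_
  convert fockBasis_mem_fockDegree (List.ofFn w ++ β) using 2
  simp [add_comm]

lemma norm_homogeneousPart_creation_apply (a : List (Fin n) → ℂ) (k : ℕ) (x : Fock n) :
    ‖homogeneousPart S a k x‖ = √(∑ w : Fin k → Fin n, ‖a (List.ofFn w)‖ ^ 2) * ‖x‖ := by
  rw [apply_norm_eq_sqrt_inner_adjoint_right, ← ContinuousLinearMap.mul_def, ← star_eq_adjoint,
    star_homogeneousPart_mul_self (star_creation_mul_creation hS), smul_apply, one_apply_eq_self,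
    inner_smul_right, RCLike.re_to_complex, Complex.re_ofReal_mul, ← RCLike.re_to_complex,
    inner_self_eq_norm_sq, Real.sqrt_mul (by positivity), Real.sqrt_sq (norm_nonneg x)]

theorem sqrt_sum_sq_le_of_norm_hermitianPolynomial_le_one {a : List (Fin n) → ℂ} {a₀ : ℝ} {d : ℕ}
    (hnorm : ‖hermitianPolynomial (homogeneousPart S a) a₀ d‖ ≤ 1) {k : ℕ} (hk : k ∈ Icc 1 d) :
    √(∑ w : Fin k → Fin n, ‖a (List.ofFn w)‖ ^ 2) ≤
      (1 - |a₀|) * Real.cos (Real.pi / (d / k + 2 : ℕ)) :=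
  le_one_sub_abs_mul_cos_of_norm_hermitianPolynomial_le_one (pairwise_isOrtho_fockDegree n)
    (fun k l _ => homogeneousPart_creation_mem_fockDegree hS a k l) hnorm hk
    (norm_homogeneousPart_creation_apply hS a k) (fockBasis_mem_fockDegree []) (norm_fockBasis [])

end Fock

theorem stmt_15 (n : ℕ) (hn : 1 ≤ n) (m : ℕ) (hm : 2 ≤ m)
    (a : List (Fin n) → ℂ) (a0 : ℝ)
    (S : Fin n → Fock n →L[ℂ] Fock n)
    (hS : ∀ (i : Fin n) (α : List (Fin n)), S i (fockBasis n α) = fockBasis n (i :: α))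
    (H : Fock n →L[ℂ] Fock n)
    (hH : H = (∑ k ∈ Finset.Icc 1 (m - 1), ∑ w : Fin k → Fin n,
        ((starRingEnd ℂ) (a (List.ofFn w))) •
          ContinuousLinearMap.adjoint (wordProd S (List.ofFn w)))
      + (a0 : ℂ) • 1
      + ∑ k ∈ Finset.Icc 1 (m - 1), ∑ w : Fin k → Fin n,
          a (List.ofFn w) • wordProd S (List.ofFn w))
    (hsa : IsSelfAdjoint H) (hnorm : ‖H‖ ≤ 1)
    (t : ℝ) (htm : t ∈ Set.Ioc (0 : ℝ) 1) (hts : fm m t = 1 / 2) :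
    (∀ k : ℕ, 1 ≤ k → k ≤ m - 1 →
      Real.sqrt (∑ w : Fin k → Fin n, ‖a (List.ofFn w)‖ ^ 2) ≤
        (1 - |a0|) * Real.cos (Real.pi / (((m - 1) / k + 2 : ℕ) : ℝ))) ∧
    (∀ r : Fin n → ℝ, (∀ i, 0 ≤ r i) → Real.sqrt (∑ i, r i ^ 2) ≤ t →
      |a0| + 2 * ∑ k ∈ Finset.Icc 1 (m - 1), ∑ w : Fin k → Fin n,
        ‖a (List.ofFn w)‖ * wordProd r (List.ofFn w) ≤ 1) := by
  have hH' : H = hermitianPolynomial (homogeneousPart S a) a0 (m - 1) := by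
    simp only [hH, hermitianPolynomial, homogeneousPart, map_sum, map_smulₛₗ]
  have hcoeff (k : ℕ) (hk : 1 ≤ k) (hkm : k ≤ m - 1) :=
    sqrt_sum_sq_le_of_norm_hermitianPolynomial_le_one hS (hH' ▸ hnorm) (mem_Icc.mpr ⟨hk, hkm⟩)
  refine ⟨hcoeff, fun r _ hrt => ?_⟩
  have hsum : ∑ k ∈ Icc 1 (m - 1), ∑ w : Fin k → Fin n,
      ‖a (List.ofFn w)‖ * wordProd r (List.ofFn w) ≤ (1 - |a0|) * fm m t := by
    rw [fm, mul_sum]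
    refine sum_le_sum fun k hk => ?_
    have hk' := hcoeff k (mem_Icc.mp hk).1 (mem_Icc.mp hk).2
    calc ∑ w : Fin k → Fin n, ‖a (List.ofFn w)‖ * wordProd r (List.ofFn w)
        ≤ √(∑ w : Fin k → Fin n, ‖a (List.ofFn w)‖ ^ 2) * √(∑ i, r i ^ 2) ^ k :=
          sum_mul_wordProd_le_sqrt_mul_pow _ r
      _ ≤ (1 - |a0|) * Real.cos (Real.pi / (((m - 1) / k + 2 : ℕ) : ℝ)) * t ^ k :=
          mul_le_mul hk' (by gcongr) (by positivity) ((Real.sqrt_nonneg _).trans hk')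
      _ = (1 - |a0|) * (t ^ k * Real.cos (Real.pi / (((m - 1) / k + 2 : ℕ) : ℝ))) := by ring
  rw [hts] at hsum
  linarith
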